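/- If a POVM A ∈ O(Ω,H) does not disturb an instrument J ∈ Ins(Λ,H,V), then A and J are compatible. Conversely, if A is sharp (projection-valued) and A and J are compatible, then A does not disturb J; in fact the Lüders instrument I^A of A does not disturb J. -/

import Mathlib

open scoped Kronecker ComplexOrder
open Matrix

noncomputable section

/-- The positive semidefinite square root of a positive semidefinite matrix
(Mathlib's former `Matrix.PosSemidef.sqrt`). -/
def Matrix.PosSemidef.sqrt {n 𝕜 : Type*} [Fintype n] [RCLike 𝕜] [DecidableEq n]
    {A : Matrix n n 𝕜} (hA : A.PosSemidef) : Matrix n n 𝕜 :=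
  hA.1.eigenvectorUnitary.1 * diagonal ((↑) ∘ Real.sqrt ∘ hA.1.eigenvalues) *
    (star hA.1.eigenvectorUnitary : Matrix n n 𝕜)

/-- Linear maps between matrix algebras, representing super-operators
`L(H) → L(K)` for finite-dimensional Hilbert spaces with index types `dH`, `dK`. -/
abbrev MatMap (dH dK : Type) : Type := Matrix dH dH ℂ →ₗ[ℂ] Matrix dK dK ℂ

variable {Ω Λ dH dK dV dA dA' : Type}

/-- The Choi matrix of a super-operator. -/
def choiMatrix [DecidableEq dH] (Φ : MatMap dH dK) : Matrix (dH × dK) (dH × dK) ℂ :=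
  fun p q => Φ (single p.1 q.1 1) p.2 q.2

/-- Complete positivity of a super-operator (positivity of its Choi matrix). -/
def IsCP [Fintype dH] [DecidableEq dH] [Fintype dK] (Φ : MatMap dH dK) : Prop :=
  (choiMatrix Φ).PosSemidef

/-- A quantum state: a positive semidefinite matrix of unit trace. -/
def IsState [Fintype dH] (ρ : Matrix dH dH ℂ) : Prop := ρ.PosSemidef ∧ ρ.trace = 1

/-- Trace-nonincreasing super-operator. -/
def IsTNI [Fintype dH] [Fintype dK] (Φ : MatMap dH dK) : Prop :=
  ∀ ρ : Matrix dH dH ℂ, ρ.PosSemidef → (Φ ρ).trace ≤ ρ.trace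

/-- Trace-preserving super-operator. -/
def IsTP [Fintype dH] [Fintype dK] (Φ : MatMap dH dK) : Prop :=
  ∀ ρ : Matrix dH dH ℂ, (Φ ρ).trace = ρ.trace

/-- A quantum instrument with outcome set `Ω` from system `dH` to system `dK`:
a family of completely positive trace-nonincreasing maps summing to a channel. -/
structure Instrument (Ω dH dK : Type) [Fintype Ω] [Fintype dH] [DecidableEq dH]
    [Fintype dK] : Type where
  op : Ω → MatMap dH dK
  cp : ∀ x, IsCP (op x)
  tni : ∀ x, IsTNI (op x)
  tp : IsTP (∑ x, op x)

/-- A quantum channel: a completely positive trace-preserving super-operator. -/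
structure Channel (dH dK : Type) [Fintype dH] [DecidableEq dH] [Fintype dK] : Type where
  map : MatMap dH dK
  cp : IsCP map
  tp : IsTP map

/-- A POVM with outcome set `Ω` on system `d`. -/
structure POVM (Ω d : Type) [Fintype Ω] [Fintype d] [DecidableEq d] : Type where
  elem : Ω → Matrix d d ℂ
  pos : ∀ x, (elem x).PosSemidef
  sum_eq : ∑ x, elem x = 1

/-- The effect (induced POVM element) of an operation `Φ`:
the unique matrix `A` with `tr[A ρ] = tr[Φ ρ]` for all `ρ`. -/
def dualId [Fintype dH] [DecidableEq dH] [Fintype dK] (Φ : MatMap dH dK) :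
    Matrix dH dH ℂ :=
  fun i j => (Φ (single j i 1)).trace

/-- Partial trace over the first tensor factor. -/
def ptraceL [Fintype dA] (M : Matrix (dA × dK) (dA × dK) ℂ) : Matrix dK dK ℂ :=
  fun i j => ∑ a, M (a, i) (a, j)

/-- Partial trace over the second tensor factor. -/
def ptraceR [Fintype dV] (M : Matrix (dK × dV) (dK × dV) ℂ) : Matrix dK dK ℂ :=
  fun i j => ∑ b, M (i, b) (j, b)

/-- Compatibility of two instruments: existence of a joint instrument whose
partial-trace marginals (summed over the other outcome) reproduce both instruments
on all states. -/
def InsCompatible [Fintype Ω] [Fintype Λ] [Fintype dH] [DecidableEq dH] [Fintype dK]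
    [Fintype dV] (I : Instrument Ω dH dK) (J : Instrument Λ dH dV) : Prop :=
  ∃ G : Instrument (Ω × Λ) dH (dK × dV),
    (∀ y, ∀ ρ : Matrix dH dH ℂ, IsState ρ → ∑ x, ptraceL (G.op (x, y) ρ) = J.op y ρ) ∧
    (∀ x, ∀ ρ : Matrix dH dH ℂ, IsState ρ → ∑ y, ptraceR (G.op (x, y) ρ) = I.op x ρ)

/-- Compatibility of an instrument and a channel (a one-outcome instrument). -/
def InsChCompatible [Fintype Ω] [Fintype dH] [DecidableEq dH] [Fintype dK] [Fintype dV]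
    (I : Instrument Ω dH dK) (Ψ : Channel dH dV) : Prop :=
  ∃ G : Instrument Ω dH (dK × dV),
    (∀ ρ : Matrix dH dH ℂ, IsState ρ → ∑ x, ptraceL (G.op x ρ) = Ψ.map ρ) ∧
    (∀ x, ∀ ρ : Matrix dH dH ℂ, IsState ρ → ptraceR (G.op x ρ) = I.op x ρ)

/-- Compatibility of two channels. -/
def ChCompatible [Fintype dH] [DecidableEq dH] [Fintype dK] [Fintype dV]
    (Φ : Channel dH dK) (Ψ : Channel dH dV) : Prop :=
  ∃ Γ : Channel dH (dK × dV),
    (∀ ρ : Matrix dH dH ℂ, IsState ρ → ptraceL (Γ.map ρ) = Ψ.map ρ) ∧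
    (∀ ρ : Matrix dH dH ℂ, IsState ρ → ptraceR (Γ.map ρ) = Φ.map ρ)

/-- Compatibility of a POVM and an instrument: existence of a joint instrument `G`
with `∑ x, G.op (x, y) = J.op y` and whose induced POVM has the POVM `A` as a margin. -/
def POVMInsCompatible [Fintype Ω] [Fintype Λ] [Fintype dH] [DecidableEq dH] [Fintype dK]
    (A : POVM Ω dH) (J : Instrument Λ dH dK) : Prop :=
  ∃ G : Instrument (Ω × Λ) dH dK,
    (∀ y, ∑ x, G.op (x, y) = J.op y) ∧
    (∀ x, ∑ y, dualId (G.op (x, y)) = A.elem x)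

/-- Compatibility (joint measurability) of two POVMs. -/
def POVMCompatible [Fintype Ω] [Fintype Λ] [Fintype dH] [DecidableEq dH]
    (A : POVM Ω dH) (B : POVM Λ dH) : Prop :=
  ∃ G : POVM (Ω × Λ) dH,
    (∀ y, ∑ x, G.elem (x, y) = B.elem y) ∧
    (∀ x, ∑ y, G.elem (x, y) = A.elem x)

/-- Compatibility of a POVM and a channel: existence of an instrument implementing both. -/
def POVMChCompatible [Fintype Ω] [Fintype dH] [DecidableEq dH] [Fintype dK]
    (A : POVM Ω dH) (Ψ : Channel dH dK) : Prop :=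
  ∃ G : Instrument Ω dH dK,
    (∑ x, G.op x) = Ψ.map ∧ ∀ x, dualId (G.op x) = A.elem x

/-- Instrument postprocessing: `I ⪯ J` if `I_x = ∑ y, R^(y)_x ∘ J_y` for
a family of instruments `R^(y)`. -/
def Postprocessed [Fintype Ω] [Fintype Λ] [Fintype dH] [DecidableEq dH] [Fintype dK]
    [Fintype dV] [DecidableEq dV] (I : Instrument Ω dH dK) (J : Instrument Λ dH dV) : Prop :=
  ∃ R : Λ → Instrument Ω dV dK, ∀ x, I.op x = ∑ y, (R y).op x ∘ₗ J.op y

/-- An instrument `I` does not disturb an instrument `J`: `J_y ∘ Φ^I = J_y`. -/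
def NonDisturbs [Fintype Ω] [Fintype Λ] [Fintype dH] [DecidableEq dH] [Fintype dV]
    (I : Instrument Ω dH dH) (J : Instrument Λ dH dV) : Prop :=
  ∀ y, J.op y ∘ₗ (∑ x, I.op x) = J.op y

/-- An instrument `I` does not disturb a channel `Ψ`: `Ψ ∘ Φ^I = Ψ`. -/
def InsNonDisturbsCh [Fintype Ω] [Fintype dH] [DecidableEq dH] [Fintype dV]
    (I : Instrument Ω dH dH) (Ψ : Channel dH dV) : Prop :=
  Ψ.map ∘ₗ (∑ x, I.op x) = Ψ.map

/-- An instrument `I` does not disturb a POVM `A`: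
the statistics of `A` are unchanged by the channel induced by `I`. -/
def InsNonDisturbsPOVM [Fintype Ω] [Fintype Λ] [Fintype dH] [DecidableEq dH]
    (I : Instrument Ω dH dH) (A : POVM Λ dH) : Prop :=
  ∀ y, ∀ ρ : Matrix dH dH ℂ,
    (A.elem y * ((∑ x, I.op x) ρ)).trace = (A.elem y * ρ).trace

/-- A POVM `A` does not disturb an instrument `J`: some instrument measuring `A`
does not disturb `J`. -/
def POVMNonDisturbs [Fintype Ω] [Fintype Λ] [Fintype dH] [DecidableEq dH] [Fintype dV]
    (A : POVM Ω dH) (J : Instrument Λ dH dV) : Prop :=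
  ∃ I : Instrument Ω dH dH, (∀ x, dualId (I.op x) = A.elem x) ∧ NonDisturbs I J

/-- A POVM `A` does not disturb a channel `Ψ`. -/
def POVMNonDisturbsCh [Fintype Ω] [Fintype dH] [DecidableEq dH] [Fintype dV]
    (A : POVM Ω dH) (Ψ : Channel dH dV) : Prop :=
  ∃ I : Instrument Ω dH dH, (∀ x, dualId (I.op x) = A.elem x) ∧ InsNonDisturbsCh I Ψ

/-- A POVM `A` does not disturb a POVM `B`. -/
def POVMNonDisturbsPOVM [Fintype Ω] [Fintype Λ] [Fintype dH] [DecidableEq dH]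
    (A : POVM Ω dH) (B : POVM Λ dH) : Prop :=
  ∃ I : Instrument Ω dH dH, (∀ x, dualId (I.op x) = A.elem x) ∧ InsNonDisturbsPOVM I B

/-- A sharp (projection-valued) POVM. -/
def IsSharp [Fintype Ω] [Fintype dH] [DecidableEq dH] (A : POVM Ω dH) : Prop :=
  ∀ x, A.elem x * A.elem x = A.elem x

/-- `(H_A, W, E)` is a dilation of the instrument `I`:
`W` is an isometry `H → H_A ⊗ K` and
`I_x(ρ) = Tr_{H_A}[W ρ W* (E(x) ⊗ 1_K)]` on all states. -/
def IsDilation [Fintype Ω] [Fintype dH] [DecidableEq dH] [Fintype dK] [DecidableEq dK]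
    [Fintype dA] [DecidableEq dA] (I : Instrument Ω dH dK)
    (W : Matrix (dA × dK) dH ℂ) (E : POVM Ω dA) : Prop :=
  Wᴴ * W = 1 ∧
  ∀ x, ∀ ρ : Matrix dH dH ℂ, IsState ρ →
    I.op x ρ = ptraceL (W * ρ * Wᴴ * (E.elem x ⊗ₖ (1 : Matrix dK dK ℂ)))

/-- Minimality of a Stinespring isometry `W : H → H_A ⊗ K`:
the span of `{(1 ⊗ B) W φ}` is everything. -/
def IsMinimalW [Fintype dH] [Fintype dK] [DecidableEq dK] [Fintype dA] [DecidableEq dA]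
    (W : Matrix (dA × dK) dH ℂ) : Prop :=
  Submodule.span ℂ {v : (dA × dK) → ℂ |
    ∃ (B : Matrix dK dK ℂ) (φ : dH → ℂ),
      v = ((1 : Matrix dA dA ℂ) ⊗ₖ B) *ᵥ (W *ᵥ φ)} = ⊤

/-- `IC` is the complementary instrument of the instrument dilated by `(W, E)`:
`IC_x(ρ) = Tr_K[(√E(x) ⊗ 1) W ρ W* (√E(x) ⊗ 1)]`. -/
def IsComplementaryOf [Fintype Ω] [Fintype dH] [DecidableEq dH] [Fintype dK]
    [DecidableEq dK] [Fintype dA] [DecidableEq dA] (W : Matrix (dA × dK) dH ℂ) (E : POVM Ω dA)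
    (IC : Instrument Ω dH dA) : Prop :=
  ∀ x, ∀ ρ : Matrix dH dH ℂ,
    IC.op x ρ =
      ptraceR (((E.pos x).sqrt ⊗ₖ (1 : Matrix dK dK ℂ)) * (W * ρ * Wᴴ) *
        ((E.pos x).sqrt ⊗ₖ (1 : Matrix dK dK ℂ)))

/-- A measure-and-prepare instrument: `I_x(ρ) = tr[A(x) ρ] ξ_x`. -/
def IsMeasureAndPrepare [Fintype Ω] [Fintype dH] [DecidableEq dH] [Fintype dK]
    [DecidableEq dK] (I : Instrument Ω dH dK) : Prop :=
  ∃ (A : POVM Ω dH) (ξ : Ω → Matrix dK dK ℂ),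
    (∀ x, IsState (ξ x)) ∧
    ∀ x, ∀ ρ : Matrix dH dH ℂ, I.op x ρ = ((A.elem x * ρ).trace) • ξ x

/-- A pure state: a state which is a (rank-one) projection. -/
def IsPureState [Fintype dK] (ρ : Matrix dK dK ℂ) : Prop :=
  IsState ρ ∧ ρ * ρ = ρ

/-- A rank-1 POVM: every effect has rank at most one. -/
def IsRankOnePOVM [Fintype Ω] [Fintype dH] [DecidableEq dH] (A : POVM Ω dH) : Prop :=
  ∀ x, (A.elem x).rank ≤ 1

/-- POVM postprocessing: `B(y) = ∑ x, ν x y • A(x)` for a stochastic matrix `ν`. -/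
def POVMPostprocessed [Fintype Ω] [Fintype Λ] [Fintype dH] [DecidableEq dH]
    (B : POVM Λ dH) (A : POVM Ω dH) : Prop :=
  ∃ ν : Ω → Λ → ℝ, (∀ x y, 0 ≤ ν x y) ∧ (∀ x, ∑ y, ν x y = 1) ∧
    ∀ y, B.elem y = ∑ x, (ν x y : ℂ) • A.elem x

/-- A measure-and-prepare instrument preparing pure states. -/
def IsMeasureAndPreparePure [Fintype Ω] [Fintype dH] [DecidableEq dH] [Fintype dK]
    [DecidableEq dK] (I : Instrument Ω dH dK) : Prop :=
  ∃ (A : POVM Ω dH) (ξ : Ω → Matrix dK dK ℂ),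
    (∀ x, IsPureState (ξ x)) ∧
    ∀ x, ∀ ρ : Matrix dH dH ℂ, I.op x ρ = ((A.elem x * ρ).trace) • ξ x

theorem qi_psd_factor {n : Type} [Fintype n] {C : Matrix n n ℂ} (h : C.PosSemidef) :
    ∃ B : Matrix n n ℂ, C = Bᴴ * B := by
  classical
  open scoped MatrixOrder in
  obtain ⟨B, hB⟩ := CStarAlgebra.nonneg_iff_eq_star_mul_self.mp h.nonneg
  exact ⟨B, hB⟩

theorem qi_single_conj {m n : Type} [Fintype m] [Fintype n] [DecidableEq n]
    (K : Matrix m n ℂ) (i j : n) (k l : m) :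
    (K * single i j (1 : ℂ) * Kᴴ) k l = K k i * star (K l j) := by
  simp [Matrix.mul_apply, single_apply, Finset.sum_ite_eq, ite_and, conjTranspose_apply]

/-- The Kraus form as a linear map. -/
def qiKraus {ι m n : Type} [Fintype ι] [Fintype m] [Fintype n] (K : ι → Matrix m n ℂ) :
    MatMap n m where
  toFun ρ := ∑ a, K a * ρ * (K a)ᴴ
  map_add' := by
    intro x y
    simp [Matrix.mul_add, Matrix.add_mul, Finset.sum_add_distrib]
  map_smul' := by
    intro c x
    simp [Finset.smul_sum]

theorem qiKraus_apply {ι m n : Type} [Fintype ι] [Fintype m] [Fintype n]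
    (K : ι → Matrix m n ℂ) (ρ : Matrix n n ℂ) :
    qiKraus K ρ = ∑ a, K a * ρ * (K a)ᴴ := rfl

theorem qi_kraus_of_cp {m n : Type} [Fintype m] [Fintype n] [DecidableEq n]
    {Φ : MatMap n m} (h : IsCP Φ) : ∃ K : n × m → Matrix m n ℂ, Φ = qiKraus K := by
  obtain ⟨B, hB⟩ := qi_psd_factor h
  refine ⟨fun a => Matrix.of fun k i => star (B a (i, k)), ?_⟩
  apply Matrix.ext_linearMap
  intro i j
  apply LinearMap.ext_ring
  ext k l
  have := congrFun (congrFun hB (i, k)) (j, l)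
  simp only [choiMatrix, Matrix.mul_apply, conjTranspose_apply] at this
  have e : qiKraus (fun a => Matrix.of fun k i => star (B a (i, k))) (single i j (1 : ℂ)) k l =
      ∑ a, star (B a (i, k)) * B a (j, l) := by
    simp only [qiKraus_apply, Matrix.sum_apply, qi_single_conj, Matrix.of_apply, star_star]
  exact this.trans e.symm

theorem qi_cp_of_kraus {ι m n : Type} [Fintype ι] [Fintype m] [Fintype n] [DecidableEq n]
    (K : ι → Matrix m n ℂ) : IsCP (qiKraus K) := by
  have : choiMatrix (qiKraus K) =
      ∑ a, vecMulVec (fun p : n × m => K a p.2 p.1) (star fun p : n × m => K a p.2 p.1) := by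
    ext p q
    simp [choiMatrix, qiKraus_apply, Matrix.sum_apply, qi_single_conj, vecMulVec_apply]
  unfold IsCP
  rw [this]
  exact posSemidef_sum _ fun a _ => posSemidef_vecMulVec_self_star _

theorem qi_comp {m n k : Type} [Fintype m] [Fintype n] [Fintype k] [DecidableEq n]
    [DecidableEq m] {Φ : MatMap n m} {Ψ : MatMap m k} (h : IsCP Φ) (h' : IsCP Ψ) :
    IsCP (Ψ ∘ₗ Φ) := by
  obtain ⟨K, rfl⟩ := qi_kraus_of_cp h
  obtain ⟨K', rfl⟩ := qi_kraus_of_cp h'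
  have : qiKraus K' ∘ₗ qiKraus K =
      qiKraus (fun a : (m × k) × (n × m) => K' a.1 * K a.2) := by
    ext1 ρ
    simp only [LinearMap.comp_apply, qiKraus_apply, conjTranspose_mul, Matrix.mul_sum, Matrix.sum_mul,
      Matrix.mul_assoc]
    exact (Fintype.sum_prod_type
      (fun x : (m × k) × (n × m) => K' x.1 * (K x.2 * (ρ * ((K x.2)ᴴ * (K' x.1)ᴴ))))).symm
  rw [this]
  exact qi_cp_of_kraus _

theorem qi_pos {m n : Type} [Fintype m] [Fintype n] [DecidableEq n]
    {Φ : MatMap n m} (h : IsCP Φ) {ρ : Matrix n n ℂ} (hρ : ρ.PosSemidef) :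
    (Φ ρ).PosSemidef := by
  obtain ⟨K, rfl⟩ := qi_kraus_of_cp h
  rw [qiKraus_apply]
  exact posSemidef_sum _ fun a _ => hρ.mul_mul_conjTranspose_same _

theorem qi_dualId_kraus {ι m n : Type} [Fintype ι] [Fintype m] [Fintype n] [DecidableEq n]
    (K : ι → Matrix m n ℂ) : dualId (qiKraus K) = ∑ a, (K a)ᴴ * K a := by
  ext i j
  simp only [dualId, qiKraus_apply, trace_sum, Matrix.sum_apply]
  refine Finset.sum_congr rfl fun a _ => ?_
  simp only [Matrix.trace, diag_apply, qi_single_conj]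
  simp only [Matrix.mul_apply, conjTranspose_apply]
  exact Finset.sum_congr rfl fun b _ => mul_comm _ _

theorem qi_sum_zero {ι m n : Type} [Fintype m] [Fintype n] (s : Finset ι)
    (M : ι → Matrix m n ℂ) (h : ∑ a ∈ s, (M a)ᴴ * M a = 0) : ∀ a ∈ s, M a = 0 := by
  intro a ha
  have h1 : ∑ a ∈ s, ((M a)ᴴ * M a).trace = 0 := by rw [← trace_sum, h, trace_zero]
  have h2 := (Finset.sum_eq_zero_iff_of_nonneg
    (fun b _ => (posSemidef_conjTranspose_mul_self (M b)).trace_nonneg)).1 h1 a ha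
  exact trace_conjTranspose_mul_self_eq_zero_iff.1 h2

theorem qi_sqrt_proj {n : Type} [Fintype n] [DecidableEq n] {P : Matrix n n ℂ}
    (hP : P.PosSemidef) (h : P * P = P) : hP.sqrt = P := by
  have key : ∀ i, Real.sqrt (hP.1.eigenvalues i) = hP.1.eigenvalues i := by
    intro i
    have e := hP.1.mulVec_eigenvectorBasis i
    have e2 : (hP.1.eigenvalues i * hP.1.eigenvalues i) • (hP.1.eigenvectorBasis i).ofLp
        = hP.1.eigenvalues i • (hP.1.eigenvectorBasis i).ofLp := by
      rw [mul_smul, ← e, ← mulVec_smul, ← e, mulVec_mulVec, h]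
    have ne : (hP.1.eigenvectorBasis i).ofLp ≠ 0 := by
      intro h0
      have := hP.1.eigenvectorBasis.orthonormal.ne_zero i
      exact this (by ext k; exact congrFun h0 k)
    have e3 := smul_left_injective ℝ ne e2
    rw [Real.sqrt_eq_iff_mul_self_eq (hP.eigenvalues_nonneg i) (hP.eigenvalues_nonneg i)]
    exact e3.symm
  have e := hP.1.spectral_theorem
  rw [Unitary.conjStarAlgAut_apply] at e
  conv_rhs => rw [e]
  unfold Matrix.PosSemidef.sqrt
  have : Real.sqrt ∘ hP.1.eigenvalues = hP.1.eigenvalues := funext key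
  rw [this]

theorem qi_trace_of_dualId {n : Type} [Fintype n] [DecidableEq n]
    (P : Matrix n n ℂ) (i j : n) : (P * single j i (1 : ℂ)).trace = P i j := by
  simp [Matrix.trace, Matrix.mul_apply, single_apply, ite_and]

theorem qi_part1 [Fintype Ω] [Fintype Λ] [Fintype dH] [DecidableEq dH] [Fintype dV]
    (A : POVM Ω dH) (J : Instrument Λ dH dV) (h : POVMNonDisturbs A J) :
    POVMInsCompatible A J := by
  obtain ⟨I, hI, hN⟩ := h
  have hsum : ∀ y, ∑ x, J.op y ∘ₗ I.op x = J.op y := by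
    intro y
    refine Eq.trans ?_ (hN y)
    ext1 ρ
    simp [LinearMap.sum_apply, map_sum]
  have hJ : ∀ ρ, ∑ y, (J.op y ρ).trace = ρ.trace := by
    intro ρ
    have := J.tp ρ
    rwa [LinearMap.sum_apply, trace_sum] at this
  refine ⟨⟨fun p => J.op p.2 ∘ₗ I.op p.1, fun p => qi_comp (I.cp _) (J.cp _), ?_, ?_⟩, hsum, ?_⟩
  · intro p ρ hρ
    exact (J.tni p.2 _ (qi_pos (I.cp p.1) hρ)).trans (I.tni p.1 _ hρ)
  · intro ρ
    rw [Fintype.sum_prod_type_right]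
    simp only [hsum]
    exact J.tp ρ
  · intro x
    rw [← hI x]
    ext i j
    simp only [Matrix.sum_apply, dualId, LinearMap.comp_apply, hJ]

theorem qi_part2 [Fintype Ω] [Fintype Λ] [Fintype dH] [DecidableEq dH] [Fintype dV]
    (A : POVM Ω dH) (J : Instrument Λ dH dV) (hS : IsSharp A) (h : POVMInsCompatible A J)
    (y : Λ) (ρ : Matrix dH dH ℂ) :
    J.op y (∑ x, A.elem x * ρ * A.elem x) = J.op y ρ := by
  classical
  obtain ⟨G, hG, hA⟩ := h
  choose K hK using fun p => qi_kraus_of_cp (G.cp p)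
  have herm : ∀ x, (A.elem x)ᴴ = A.elem x := fun x => (A.pos x).1
  have hKP : ∀ x y a, K (x, y) a * A.elem x = K (x, y) a := by
    intro x y a
    have h0 : ∑ p : Λ × (dH × dV), (K (x, p.1) p.2 * (1 - A.elem x))ᴴ *
        (K (x, p.1) p.2 * (1 - A.elem x)) = 0 := by
      have e := hA x
      simp only [hK, qi_dualId_kraus] at e
      rw [Fintype.sum_prod_type]
      calc _ = (1 - A.elem x) * (∑ y, ∑ a, (K (x, y) a)ᴴ * K (x, y) a) * (1 - A.elem x) := by
            simp only [Matrix.mul_sum, Matrix.sum_mul, conjTranspose_mul, conjTranspose_sub,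
              conjTranspose_one, herm, Matrix.mul_assoc]
        _ = 0 := by
            rw [e, Matrix.sub_mul, Matrix.one_mul, hS x, sub_self, Matrix.zero_mul]
    have := qi_sum_zero _ _ h0 (y, a) (Finset.mem_univ _)
    rw [Matrix.mul_sub, Matrix.mul_one, sub_eq_zero] at this
    exact this.symm
  have horth : ∀ x x', x' ≠ x → A.elem x' * A.elem x = 0 := by
    intro x x' hne
    have h0 : ∑ z ∈ Finset.univ.erase x, (A.elem z * A.elem x)ᴴ * (A.elem z * A.elem x) = 0 := by
      have e : ∑ z, (A.elem z * A.elem x)ᴴ * (A.elem z * A.elem x) = A.elem x := by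
        calc _ = A.elem x * (∑ z, A.elem z) * A.elem x := by
              simp only [Matrix.mul_sum, Matrix.sum_mul, conjTranspose_mul, herm]
              refine Finset.sum_congr rfl fun z _ => ?_
              rw [Matrix.mul_assoc, ← Matrix.mul_assoc (A.elem z), hS z, Matrix.mul_assoc]
          _ = A.elem x := by rw [A.sum_eq, Matrix.mul_one, hS x]
      rw [← Finset.add_sum_erase _ _ (Finset.mem_univ x), hS x, herm, hS x] at e
      simpa using e
    exact qi_sum_zero _ _ h0 x' (by simp [hne])
  have horth' : ∀ x x', x' ≠ x → A.elem x * A.elem x' = 0 := fun x x' hne => horth x' x hne.symm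
  have hKz : ∀ x x' a, x' ≠ x → K (x, y) a * A.elem x' = 0 := by
    intro x x' a hne
    rw [← hKP x y a, Matrix.mul_assoc, horth' x x' hne, Matrix.mul_zero]
  rw [← hG y]
  simp only [LinearMap.sum_apply]
  refine Finset.sum_congr rfl fun x _ => ?_
  rw [hK, qiKraus_apply, qiKraus_apply]
  refine Finset.sum_congr rfl fun a _ => ?_
  rw [Matrix.mul_sum, Matrix.sum_mul, Finset.sum_eq_single x]
  · have e1 := hKP x y a
    have e2 := congrArg conjTranspose e1
    rw [conjTranspose_mul, herm] at e2
    rw [← Matrix.mul_assoc, ← Matrix.mul_assoc, e1, Matrix.mul_assoc, e2]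
  · intro x' _ hne
    rw [← Matrix.mul_assoc, ← Matrix.mul_assoc, hKz x x' a hne]
    simp
  · simp

/-- If a POVM `A` does not disturb an instrument `J`, then `A` and `J` are
compatible. Conversely, if `A` is sharp and `A` and `J` are compatible, then `A` does not
disturb `J`; in fact the Lüders instrument of `A` does not disturb `J`. -/
theorem povm_nondisturbance_and_compatibility
    [Fintype Ω] [Fintype Λ] [Fintype dH] [DecidableEq dH] [Fintype dV]
    (A : POVM Ω dH) (J : Instrument Λ dH dV)
    (L : Instrument Ω dH dH)
    (hL : ∀ x, ∀ ρ : Matrix dH dH ℂ, L.op x ρ = (A.pos x).sqrt * ρ * (A.pos x).sqrt) :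
    (POVMNonDisturbs A J → POVMInsCompatible A J) ∧
    (IsSharp A → POVMInsCompatible A J →
      NonDisturbs L J ∧ POVMNonDisturbs A J) := by
  refine ⟨qi_part1 A J, fun hS hC => ?_⟩
  have hL' : ∀ x ρ, L.op x ρ = A.elem x * ρ * A.elem x := by
    intro x ρ
    rw [hL, qi_sqrt_proj (A.pos x) (hS x)]
  have hN : NonDisturbs L J := by
    intro y
    apply LinearMap.ext
    intro ρ
    rw [LinearMap.comp_apply, LinearMap.sum_apply]
    simp only [hL']
    exact qi_part2 A J hS hC y ρ
  refine ⟨hN, L, ?_, hN⟩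
  intro x
  ext i j
  rw [dualId, hL', Matrix.trace_mul_comm, ← Matrix.mul_assoc, hS x]
  exact qi_trace_of_dualId _ i j
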